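/- Let Φ = A_{n−1}, let I, J ⊆ Δ, and let λ̄ be a dominant integral weight with Φ_{λ̄} = Φ_J. Then there exists a Φ_I-regular weight μ such that λ ⟷ μ for every Φ_I-regular weight λ ∈ Wλ̄. -/

import Mathlib

namespace JantzenBlocksA

open scoped Classical

/-- The weight space `ℝ^n`. -/
abbrev V (n : ℕ) := Fin n → ℝ

noncomputable section

/-- The standard inner product on `ℝ^n`. -/
def inn {n : ℕ} (x y : V n) : ℝ := ∑ i, x i * y i

/-- The standard basis vector `e i`. -/
def ee {n : ℕ} (i : Fin n) : V n := Pi.single i 1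

/-- The reflection `s_v` in the vector `v`. -/
def sRefl {n : ℕ} (v x : V n) : V n := x - (2 * inn x v / inn v v) • v

/-- The root system `Φ = A_{n-1} = {e_i - e_j : i ≠ j}`. -/
def PhiA (n : ℕ) : Set (V n) := {v | ∃ i j : Fin n, i ≠ j ∧ v = ee i - ee j}

/-- The positive system `Φ⁺ = {e_i - e_j : i < j}`. -/
def PhiAPos (n : ℕ) : Set (V n) := {v | ∃ i j : Fin n, i < j ∧ v = ee i - ee j}

/-- The simple root `α_{i+1} = e_{i+1} - e_{i+2}` (`0`-based index `i < n-1`). -/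
def alphaA (n : ℕ) (i : Fin n) : V n :=
  if h : i.1 + 1 < n then ee i - ee ⟨i.1 + 1, h⟩ else 0

/-- The subsystem `Φ_I` generated by the simple roots indexed by `I`. -/
def PhiI (n : ℕ) (I : Finset (Fin n)) : Set (V n) :=
  PhiA n ∩ (Submodule.span ℝ (alphaA n '' (I : Set (Fin n))) : Set (V n))

/-- `λ` is `Φ_I`-regular. -/
def RegI (n : ℕ) (I : Finset (Fin n)) (lam : V n) : Prop :=
  ∀ β ∈ PhiI n I, inn lam β ≠ 0

/-- `λ` is integral. -/
def IntegralW (n : ℕ) (lam : V n) : Prop :=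
  ∀ β ∈ PhiA n, ∃ k : ℤ, 2 * inn lam β / inn β β = (k : ℝ)

/-- `λ` is dominant. -/
def DominantW (n : ℕ) (lam : V n) : Prop :=
  ∀ i : Fin n, 0 ≤ inn lam (alphaA n i)

/-- `μ` lies in the `W_I`-orbit of `λ`. -/
def WIOrb (n : ℕ) (I : Finset (Fin n)) : V n → V n → Prop :=
  Relation.ReflTransGen (fun x y => ∃ i ∈ I, y = sRefl (alphaA n i) x)

/-- `μ` lies in the `W`-orbit of `λ`. -/
def WOrb (n : ℕ) : V n → V n → Prop := WIOrb n Finset.univ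

/-- `λ ∈ Λ_I⁺`. -/
def LamIPlus (n : ℕ) (I : Finset (Fin n)) (lam : V n) : Prop :=
  IntegralW n lam ∧ ∀ i ∈ I, 0 < inn lam (alphaA n i)

/-- The sorted list `q_1 < … < q_{m-1}` (`1`-based values) of indices of `Δ∖I`. -/
def QlistA (n : ℕ) (I : Finset (Fin n)) : List ℕ :=
  (((Finset.univ.filter (fun j : Fin n => j.1 + 1 < n)) \ I).sort (· ≤ ·)).map
    (fun j => j.1 + 1)

/-- The number `m` of segments determined by `I`. -/
def mvalA (n : ℕ) (I : Finset (Fin n)) : ℕ := (QlistA n I).length + 1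

/-- `q_s`, with the conventions `q_0 = 0` and `q_m = n`. -/
def qA (n : ℕ) (I : Finset (Fin n)) (s : ℕ) : ℕ :=
  if s = 0 then 0 else if s < mvalA n I then (QlistA n I).getD (s - 1) 0 else n

/-- The multiplicity `n̄_t` of the `t`-th distinct value of a dominant weight. -/
def nbarA (n : ℕ) (J : Finset (Fin n)) (t : ℕ) : ℕ := qA n J t - qA n J (t - 1)

/-- `a_t = λ̄_{q̄_t}`: the `t`-th distinct entry value of the dominant weight `λ̄`. -/
def aA (n : ℕ) (J : Finset (Fin n)) (lbar : V n) (t : ℕ) : ℝ :=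
  if h : qA n J t - 1 < n then lbar ⟨qA n J t - 1, h⟩ else 0

/-- `β` is a linked root of `λ` (type `A`: no exceptional cases). -/
def LinkedA (n : ℕ) (I : Finset (Fin n)) (lam β : V n) : Prop :=
  RegI n I lam ∧ β ∈ PhiAPos n ∧ β ∉ PhiI n I ∧
  RegI n I (sRefl β lam) ∧ sRefl β lam ≠ lam

/-- One step in a connecting chain. -/
def ConnStepA (n : ℕ) (I : Finset (Fin n)) (x y : V n) : Prop :=
  RegI n I x ∧ RegI n I y ∧
  (WIOrb n I x y ∨ ∃ β : V n, LinkedA n I x β ∧ WIOrb n I (sRefl β x) y)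

/-- `λ ⟷ μ`: `λ` and `μ` are connected. -/
def ConnA (n : ℕ) (I : Finset (Fin n)) (lam mu : V n) : Prop :=
  RegI n I lam ∧ RegI n I mu ∧ Relation.ReflTransGen (ConnStepA n I) lam mu

/-- The set `^IW^Jλ̄ = Wλ̄ ∩ Λ_I⁺`. -/
def IWJsetA (n : ℕ) (I : Finset (Fin n)) (lbar : V n) : Set (V n) :=
  {mu | WOrb n lbar mu ∧ LamIPlus n I mu}

end

/-- Block-injectivity. -/
def RegB {n : ℕ} (b : Fin n → ℕ) (x : V n) : Prop :=
  ∀ i j, i ≠ j → b i = b j → x i ≠ x j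

/-- Swap steps. -/
def StepB {n : ℕ} (b : Fin n → ℕ) (x y : V n) : Prop :=
  RegB b x ∧ RegB b y ∧ ∃ i j, y = x ∘ Equiv.swap i j

lemma StepB.symm {n : ℕ} {b : Fin n → ℕ} {x y : V n} (h : StepB b x y) : StepB b y x := by
  obtain ⟨h1, h2, i, j, rfl⟩ := h
  refine ⟨h2, h1, i, j, ?_⟩
  funext k
  simp

/-- number of occurrences -/
noncomputable def mult {n : ℕ} (x : V n) (v : ℝ) : ℕ := (Finset.univ.filter (fun i => x i = v)).card

lemma mult_comp {n : ℕ} (x : V n) (e : Equiv.Perm (Fin n)) (v : ℝ) :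
    mult (x ∘ e) v = mult x v := by
  unfold mult
  apply Finset.card_bij (fun i _ => e i)
  · intro i hi; simpa using hi
  · intro i _ j _ h; exact e.injective h
  · intro i hi; exact ⟨e.symm i, by simpa using hi, by simp⟩

lemma swap_reg_same {n : ℕ} {b : Fin n → ℕ} {x : V n} (hx : RegB b x) {i j : Fin n}
    (h : b i = b j) : RegB b (x ∘ Equiv.swap i j) := by
  have hb : ∀ l, b (Equiv.swap i j l) = b l := by
    intro l
    rw [Equiv.swap_apply_def]
    split_ifs <;> simp_all
  intro p q hpq hbpq
  exact hx _ _ (fun h => hpq ((Equiv.swap i j).injective h)) (by rw [hb, hb, hbpq])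

lemma swap_reg_diff {n : ℕ} {b : Fin n → ℕ} {x : V n} (hx : RegB b x) {i j : Fin n}
    (hi : ∀ l, b l = b i → x l ≠ x j) (hj : ∀ l, b l = b j → x l ≠ x i) :
    RegB b (x ∘ Equiv.swap i j) := by
  intro p q hpq hb
  simp only [Function.comp, Equiv.swap_apply_def]
  have h1 := hx p q hpq hb
  have h2 := hi p
  have h3 := hi q
  have h4 := hj p
  have h5 := hj q
  have h6 := hi j
  have h7 := hi i
  split_ifs <;> grind

lemma good_step {n : ℕ} {b : Fin n → ℕ} (hb : Monotone b) {x : V n} (hx : RegB b x) (k : Fin n)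
    (c : ℝ) (hc : ∀ l, b l = b k → x l ≠ c)
    (hcard : (Finset.univ.filter (fun i => k ≤ i ∧ x i = x k)).card
      ≤ (Finset.univ.filter (fun i => k ≤ i ∧ x i = c)).card) :
    ∃ j, k ≤ j ∧ x j = c ∧ RegB b (x ∘ Equiv.swap k j) := by
  set A := Finset.univ.filter (fun i => k ≤ i ∧ x i = x k) with hA
  set C := Finset.univ.filter (fun i => k ≤ i ∧ x i = c) with hC
  have key : ∃ j ∈ C, ∀ l ∈ A, b l ≠ b j := by
    by_contra! hcon
    have hsub : C.image b ⊆ (A.erase k).image b := by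
      intro t ht
      obtain ⟨j, hj, rfl⟩ := Finset.mem_image.1 ht
      obtain ⟨l, hl, hlj⟩ := hcon j hj
      refine Finset.mem_image.2 ⟨l, Finset.mem_erase.2 ⟨?_, hl⟩, hlj⟩
      rintro rfl
      exact hc j hlj.symm (by simp [hC] at hj; exact hj.2)
    have h1 : (C.image b).card = C.card := by
      apply Finset.card_image_of_injOn
      intro p hp q hq hpq
      by_contra hne
      simp [hC] at hp hq
      exact hx p q hne hpq (hp.2.trans hq.2.symm)
    have h2 := Finset.card_le_card hsub
    have h3 : ((A.erase k).image b).card ≤ (A.erase k).card := Finset.card_image_le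
    have h4 : (A.erase k).card < A.card := Finset.card_erase_lt_of_mem (by simp [hA])
    omega
  obtain ⟨j, hj, hl⟩ := key
  have hj' : k ≤ j ∧ x j = c := by simpa [hC] using hj
  refine ⟨j, hj'.1, hj'.2, swap_reg_diff hx ?_ ?_⟩
  · intro l h; rw [hj'.2]; exact hc l h
  · intro l hlj hxl
    rcases le_or_gt k l with h | h
    · exact hl l (by simp [hA, h, hxl]) hlj
    · have h1 := hb h.le
      have h2 := hb hj'.1
      exact hc j (by omega) hj'.2

lemma ryser {n : ℕ} {b : Fin n → ℕ} (hb : Monotone b) (d : ℕ) : ∀ k : ℕ, k + d = n →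
    ∀ x y : V n, RegB b x → RegB b y → (∀ v, mult x v = mult y v) →
    (∀ i : Fin n, i.1 < k → x i = y i) → Relation.ReflTransGen (StepB b) x y := by
  induction d with
  | zero =>
    intro k hk x y _ _ _ h
    have : x = y := by
      funext i; exact h i (by have := i.2; omega)
    rw [this]
  | succ d ih =>
    intro k hk x y hx hy hm hag
    have ih' := ih (k+1) (by omega)
    let K : Fin n := ⟨k, by omega⟩
    -- modify x
    have modx : ∀ x y : V n, RegB b x → RegB b y → (∀ v, mult x v = mult y v) →
        (∀ i : Fin n, i.1 < k → x i = y i) →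
        (∃ j, K ≤ j ∧ x j = y K ∧ RegB b (x ∘ Equiv.swap K j)) →
        Relation.ReflTransGen (StepB b) x y := by
      intro x y hx hy hm hag ⟨j, hKj, hj, hr⟩
      refine Relation.ReflTransGen.head (b := x ∘ Equiv.swap K j) ⟨hx, hr, K, j, rfl⟩ ?_
      refine ih' _ _ hr hy (fun v => by rw [mult_comp, hm]) ?_
      intro i hi
      rcases Nat.lt_succ_iff_lt_or_eq.1 hi with h | h
      · have h1 : i ≠ K := by rintro rfl; simp [K] at h
        have h2 : i ≠ j := by
          rintro rfl
          have : k ≤ i.1 := hKj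
          omega
        simp [Equiv.swap_apply_of_ne_of_ne h1 h2, hag i h]
      · have : i = K := Fin.ext h
        subst this
        simp [hj]
    have symR : ∀ x y : V n, Relation.ReflTransGen (StepB b) x y →
        Relation.ReflTransGen (StepB b) y x := by
      intro x y h
      induction h with
      | refl => exact .refl
      | tail _ h2 ih3 => exact .head h2.symm ih3
    -- tail counts
    have cnt : ∀ v, (Finset.univ.filter (fun i => K ≤ i ∧ x i = v)).card
        = (Finset.univ.filter (fun i => K ≤ i ∧ y i = v)).card := by
      intro v
      have e : ∀ z : V n, mult z v = (Finset.univ.filter (fun i => K ≤ i ∧ z i = v)).card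
          + (Finset.univ.filter (fun i => i < K ∧ z i = v)).card := by
        intro z
        unfold mult
        rw [← Finset.card_filter_add_card_filter_not (s := Finset.univ.filter (fun i => z i = v))
          (fun i => K ≤ i), Finset.filter_filter, Finset.filter_filter]
        simp only [not_le, and_comm]
      have e2 : (Finset.univ.filter (fun i => i < K ∧ x i = v))
          = (Finset.univ.filter (fun i => i < K ∧ y i = v)) := by
        apply Finset.filter_congr
        intro i _
        constructor
        · rintro ⟨h, h'⟩; exact ⟨h, by rw [← hag i h]; exact h'⟩
        · rintro ⟨h, h'⟩; exact ⟨h, by rw [hag i h]; exact h'⟩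
      have := hm v
      rw [e x, e y, e2] at this
      omega
    have same : ∀ x y : V n, RegB b x → RegB b y → (∀ i : Fin n, i.1 < k → x i = y i) →
        (∃ l, b l = b K ∧ x l = y K) →
        (∃ j, K ≤ j ∧ x j = y K ∧ RegB b (x ∘ Equiv.swap K j)) := by
      intro x y hx hy hag ⟨l, hl, hxl⟩
      refine ⟨l, ?_, hxl, swap_reg_same hx hl.symm⟩
      by_contra h
      have h : l < K := not_le.1 h
      exact hy l K h.ne hl (by rw [← hag l h, hxl])
    by_cases c1 : ∃ l, b l = b K ∧ x l = y K
    · exact modx x y hx hy hm hag (same x y hx hy hag c1)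
    by_cases c2 : ∃ l, b l = b K ∧ y l = x K
    · exact symR _ _ (modx y x hy hx (fun v => (hm v).symm) (fun i hi => (hag i hi).symm)
        (same y x hy hx (fun i hi => (hag i hi).symm) c2))
    push Not at c1 c2
    rcases le_total (Finset.univ.filter (fun i => K ≤ i ∧ x i = x K)).card
      (Finset.univ.filter (fun i => K ≤ i ∧ x i = y K)).card with h | h
    · exact modx x y hx hy hm hag (good_step hb hx K _ c1 h)
    · rw [cnt, cnt] at h
      exact symR _ _ (modx y x hy hx (fun v => (hm v).symm) (fun i hi => (hag i hi).symm)
        (good_step hb hy K _ c2 h))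

lemma inn_root {n : ℕ} (x : V n) (i j : Fin n) : inn x (ee i - ee j) = x i - x j := by
  simp [inn, ee, mul_sub, Pi.single_apply]

lemma sRefl_root {n : ℕ} (x : V n) {i j : Fin n} (h : i ≠ j) :
    sRefl (ee i - ee j) x = x ∘ Equiv.swap i j := by
  have h2 : inn (ee i - ee j) (ee i - ee j : V n) = 2 := by
    rw [inn_root]
    simp [ee, Pi.single_apply, h, h.symm]
    norm_num
  funext k
  rw [sRefl, h2, inn_root]
  simp only [Function.comp, Equiv.swap_apply_def, Pi.sub_apply,
    Pi.smul_apply, smul_eq_mul, ee, Pi.single_apply]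
  split_ifs <;> simp_all <;> ring

/-- block index -/
def blk {n : ℕ} (I : Finset (Fin n)) (i : Fin n) : ℕ :=
  (Finset.univ.filter (fun k => k ∉ I ∧ k < i)).card

lemma blk_mono {n : ℕ} (I : Finset (Fin n)) : Monotone (blk I) := by
  intro i j h
  apply Finset.card_le_card
  intro k hk
  simp at hk ⊢
  exact ⟨hk.1, hk.2.trans_le h⟩

lemma blk_lt {n : ℕ} (I : Finset (Fin n)) {i k j : Fin n} (h1 : i ≤ k) (h2 : k < j) (hk : k ∉ I) :
    blk I i < blk I j := by
  apply Finset.card_lt_card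
  rw [Finset.ssubset_iff_of_subset]
  · exact ⟨k, by simp [hk, h2], by simp [hk, h1]⟩
  · intro l hl
    simp at hl ⊢
    exact ⟨hl.1, hl.2.trans_le (h1.trans h2.le)⟩

lemma blk_succ {n : ℕ} (I : Finset (Fin n)) {k : Fin n} (h : k.1 + 1 < n) (hk : k ∈ I) :
    blk I ⟨k.1 + 1, h⟩ = blk I k := by
  unfold blk
  congr 1
  apply Finset.filter_congr
  intro l _
  constructor
  · rintro ⟨h1, h2⟩
    refine ⟨h1, lt_of_le_of_ne (Nat.lt_succ_iff.1 h2) ?_⟩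
    rintro rfl; exact h1 hk
  · rintro ⟨h1, h2⟩
    exact ⟨h1, Nat.lt_succ_of_lt h2⟩

lemma span_blk {n : ℕ} (I : Finset (Fin n)) (v : V n)
    (hv : v ∈ Submodule.span ℝ (alphaA n '' (I : Set (Fin n)))) :
    inn (fun i => (blk I i : ℝ)) v = 0 := by
  induction hv using Submodule.span_induction with
  | mem x hx =>
    obtain ⟨k, hk, rfl⟩ := hx
    unfold alphaA
    split_ifs with h
    · rw [inn_root, blk_succ I h hk, sub_self]
    · simp [inn]
  | zero => simp [inn]
  | add x y _ _ hx hy =>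
    simp only [inn, Pi.add_apply, mul_add, Finset.sum_add_distrib] at *
    rw [hx, hy, add_zero]
  | smul a x _ hx =>
    simp only [inn, Pi.smul_apply, smul_eq_mul] at *
    rw [← mul_zero a, ← hx, Finset.mul_sum]
    exact Finset.sum_congr rfl (fun i _ => by ring)

lemma mem_span_of {n : ℕ} (I : Finset (Fin n)) (i : Fin n) (d : ℕ) : ∀ j : Fin n, j.1 = i.1 + d →
    blk I i = blk I j →
    (ee i - ee j : V n) ∈ Submodule.span ℝ (alphaA n '' (I : Set (Fin n))) := by
  induction d with
  | zero =>
    intro j hj _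
    have : i = j := Fin.ext (by omega)
    simp [this]
  | succ d ih =>
    intro j hj hb
    have hj2 := j.2
    let p : Fin n := ⟨i.1 + d, by omega⟩
    have hip : i ≤ p := by simp [p, Fin.le_def]
    have hpj : p < j := by simp [p, Fin.lt_def]; omega
    have hp : p ∈ I := by
      by_contra h
      have := blk_lt I hip hpj h
      omega
    have hbp : blk I i = blk I p := by
      have := blk_mono I hip
      have := blk_mono I hpj.le
      omega
    have h1 := ih p rfl hbp
    have h2 : (ee p - ee j : V n) ∈ Submodule.span ℝ (alphaA n '' (I : Set (Fin n))) := by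
      apply Submodule.subset_span
      refine ⟨p, hp, ?_⟩
      have hlt : p.1 + 1 < n := by simp [p]; omega
      have : j = ⟨p.1 + 1, hlt⟩ := Fin.ext (by simp [p]; omega)
      simp [alphaA, hlt, this]
    have := Submodule.add_mem _ h1 h2
    simpa using this

lemma root_mem_PhiI {n : ℕ} (I : Finset (Fin n)) {i j : Fin n} (h : i ≠ j) :
    (ee i - ee j : V n) ∈ PhiI n I ↔ blk I i = blk I j := by
  constructor
  · rintro ⟨_, h2⟩
    have := span_blk I _ h2
    rw [inn_root, sub_eq_zero] at this
    exact_mod_cast this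
  · intro hb
    refine ⟨⟨i, j, h, rfl⟩, ?_⟩
    rcases le_total i j with hij | hij
    · exact mem_span_of I i (j.1 - i.1) j (by have : i.1 ≤ j.1 := hij; omega) hb
    · have := mem_span_of I j (i.1 - j.1) i (by have : j.1 ≤ i.1 := hij; omega) hb.symm
      have := Submodule.neg_mem _ this
      simpa using this

lemma reg_iff {n : ℕ} (I : Finset (Fin n)) (x : V n) : RegI n I x ↔ RegB (blk I) x := by
  constructor
  · intro h i j hij hb he
    apply h _ ((root_mem_PhiI I hij).2 hb)
    rw [inn_root, he, sub_self]
  · rintro h β hβ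
    obtain ⟨i, j, hij, rfl⟩ := hβ.1
    rw [inn_root, sub_ne_zero]
    exact h i j hij ((root_mem_PhiI I hij).1 hβ)

lemma orb_swap {n : ℕ} (I : Finset (Fin n)) (i : Fin n) (d : ℕ) : ∀ j : Fin n,
    j.1 = i.1 + (d + 1) → blk I i = blk I j → ∀ x : V n, WIOrb n I x (x ∘ Equiv.swap i j) := by
  have adj : ∀ p j : Fin n, j.1 = p.1 + 1 → p ∈ I → ∀ x : V n,
      WIOrb n I x (x ∘ Equiv.swap p j) := by
    intro p j hj hp x
    refine Relation.ReflTransGen.single ⟨p, hp, ?_⟩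
    have hlt : p.1 + 1 < n := by have := j.2; omega
    have : j = ⟨p.1 + 1, hlt⟩ := Fin.ext hj
    have hne : p ≠ j := by rintro rfl; omega
    rw [← sRefl_root x hne]
    simp [alphaA, hlt, this]
  induction d with
  | zero =>
    intro j hj hb x
    refine adj i j (by omega) ?_ x
    by_contra h
    have := blk_lt I le_rfl (show i < j by rw [Fin.lt_def]; omega) h
    omega
  | succ d ih =>
    intro j hj hb x
    have hj2 := j.2
    let p : Fin n := ⟨i.1 + (d + 1), by omega⟩
    have hip : i < p := by simp [p, Fin.lt_def]
    have hpj : p < j := by simp [p, Fin.lt_def]; omega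
    have hp : p ∈ I := by
      by_contra h
      have := blk_lt I hip.le hpj h
      omega
    have hbp : blk I i = blk I p := by
      have := blk_mono I hip.le
      have := blk_mono I hpj.le
      omega
    have e : x ∘ Equiv.swap i j =
        ((x ∘ Equiv.swap p j) ∘ Equiv.swap i p) ∘ Equiv.swap p j := by
      have h1 : i ≠ p := hip.ne
      have h2 : p ≠ j := hpj.ne
      have h3 : i ≠ j := (hip.trans hpj).ne
      funext k
      simp only [Function.comp, Equiv.swap_apply_def]
      congr 1
      split_ifs <;> grind
    rw [e]
    have hjp : j.1 = p.1 + 1 := by simp [p]; omega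
    exact ((adj p j hjp hp x).trans (ih p rfl hbp _)).trans (adj p j hjp hp _)

lemma step_conn {n : ℕ} (I : Finset (Fin n)) {x y : V n} (h : StepB (blk I) x y) :
    Relation.ReflTransGen (ConnStepA n I) x y := by
  obtain ⟨hx, hy, i, j, rfl⟩ := h
  wlog hij : i ≤ j generalizing i j
  · rw [Equiv.swap_comm] at hy ⊢
    exact this j i hy (le_of_not_ge hij)
  rcases hij.eq_or_lt with rfl | hlt
  · simp; exact .refl
  have hne := hlt.ne
  by_cases he : x ∘ Equiv.swap i j = x
  · rw [he]
  apply Relation.ReflTransGen.single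
  refine ⟨(reg_iff I _).2 hx, (reg_iff I _).2 hy, ?_⟩
  by_cases hb : blk I i = blk I j
  · left
    have : i.1 < j.1 := hlt
    exact orb_swap I i (j.1 - i.1 - 1) j (by omega) hb x
  · right
    refine ⟨ee i - ee j, ⟨(reg_iff I _).2 hx, ⟨i, j, hlt, rfl⟩, ?_, ?_, ?_⟩, ?_⟩
    · rwa [root_mem_PhiI I hne]
    · rw [sRefl_root x hne]; exact (reg_iff I _).2 hy
    · rwa [sRefl_root x hne]
    · rw [sRefl_root x hne]; exact .refl

lemma conn_of {n : ℕ} (I : Finset (Fin n)) {x y : V n}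
    (h : Relation.ReflTransGen (StepB (blk I)) x y) :
    Relation.ReflTransGen (ConnStepA n I) x y := by
  induction h with
  | refl => exact .refl
  | tail _ hs ih => exact ih.trans (step_conn I hs)

lemma orb_mult {n : ℕ} {x y : V n} (h : WOrb n x y) (v : ℝ) : mult y v = mult x v := by
  unfold WOrb WIOrb at h
  induction h with
  | refl => rfl
  | tail _ h ih =>
    obtain ⟨i, _, rfl⟩ := h
    unfold alphaA
    split_ifs with hi
    · rw [sRefl_root _ (by intro h; have := congrArg Fin.val h; simp at this), mult_comp, ih]
    · simpa [sRefl] using ih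

/-- Lemma 6.11 / `bkswlem2`. -/
theorem statement13 (n : ℕ) (I J : Finset (Fin n)) (lbar : V n)
    (hIidx : ∀ i ∈ I, i.1 + 1 < n) (hJidx : ∀ j ∈ J, j.1 + 1 < n)
    (hint : IntegralW n lbar) (hdom : DominantW n lbar)
    (hJ : ∀ i : Fin n, i.1 + 1 < n → (i ∈ J ↔ inn lbar (alphaA n i) = 0)) :
    ∃ mu : V n, RegI n I mu ∧
      ∀ lam : V n, WOrb n lbar lam → RegI n I lam → ConnA n I lam mu := by
  by_cases h : ∃ mu, WOrb n lbar mu ∧ RegI n I mu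
  · obtain ⟨mu, h1, h2⟩ := h
    refine ⟨mu, h2, fun lam h3 h4 => ⟨h4, h2, ?_⟩⟩
    have := ryser (blk_mono I) n 0 (by omega) lam mu ((reg_iff I _).1 h4) ((reg_iff I _).1 h2)
      (fun v => by rw [orb_mult h3, orb_mult h1]) (fun i hi => absurd hi (by omega))
    exact conn_of I this
  · push Not at h
    refine ⟨fun i => (i.1 : ℝ), ?_, fun lam h3 h4 => absurd h4 (h lam h3)⟩
    rw [reg_iff]
    intro i j hij _ he
    exact hij (Fin.ext (Nat.cast_injective (R := ℝ) he))

end JantzenBlocksA
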